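/- Let a_{n,k} = |S_{n,k}^{1≺n}(1324)| (with a_{n,k} = 0 when no such permutations exist). In the ring of formal power series over the integers, define f = Σ_{n≥1} a_{n+1,1} x^n and, for k ≥ 1, T_{1,k} = Σ_{n≥1} a_{n,k} x^n. Then for every k ≥ 1, T_{1,k} = x · f^k. -/

import Mathlib

/-- A permutation of `{1,…,n}` (encoded as `Equiv.Perm (Fin n)` with 0-based values)
avoids the pattern 1324 if there are no indices `i < j < k < l` with
`σ i < σ k < σ j < σ l`. -/
def Avoids1324 {n : ℕ} (σ : Equiv.Perm (Fin n)) : Prop :=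
  ¬ ∃ i j k l : Fin n, i < j ∧ j < k ∧ k < l ∧ σ i < σ k ∧ σ k < σ j ∧ σ j < σ l

/-- The set `S_{n,k}^{a ≺ n}(1324)`: 1324-avoiding permutations with the entry `a`
exactly `k` places to the left of the entry `n`, and the entries `1, …, a-1` all to
the right of `n`.  (Values are 0-based: the entry `a` is `⟨a-1, _⟩`.) -/
def SPerm (n a k : ℕ) : Set (Equiv.Perm (Fin n)) :=
  {σ | Avoids1324 σ ∧ ∃ hn : n - 1 < n, ∃ ha : a - 1 < n,
    ((σ.symm ⟨n - 1, hn⟩ : Fin n) : ℕ) = ((σ.symm ⟨a - 1, ha⟩ : Fin n) : ℕ) + k ∧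
    ∀ b : Fin n, (b : ℕ) + 1 < a → σ.symm ⟨n - 1, hn⟩ < σ.symm b}

def Av (l : List ℕ) : Prop :=
  ∀ p q r s, List.Sublist [p, q, r, s] l → p < r → r < q → q < s → False

def Wd (lo hi : ℕ) (t : List ℕ × List ℕ × List ℕ) : List ℕ :=
  t.1 ++ lo :: (t.2.1 ++ hi :: t.2.2)

def QS (lo hi k : ℕ) : Set (List ℕ × List ℕ × List ℕ) :=
  {t | (Wd lo hi t).Nodup ∧ (∀ x, x ∈ Wd lo hi t ↔ lo ≤ x ∧ x ≤ hi) ∧ Av (Wd lo hi t) ∧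
    t.2.1.length + 1 = k}

lemma Av.mono {l m : List ℕ} (h : Av m) (s : l.Sublist m) : Av l :=
  fun p q r t hs => h p q r t (hs.trans s)

lemma sub_left {a : ℕ} {t X Y : List ℕ} (h : (a :: t).Sublist (X ++ Y)) (ha : a ∉ X) :
    (a :: t).Sublist Y := by
  induction X with
  | nil => simpa using h
  | cons x X ih =>
    rw [List.cons_append] at h
    cases h with
    | cons _ h => exact ih h (fun h' => ha (by simp [h']))
    | cons_cons _ h => exact absurd (by simp) ha

lemma sub_right {a : ℕ} {t X Y : List ℕ} (h : (t ++ [a]).Sublist (X ++ Y)) (ha : a ∉ Y) :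
    (t ++ [a]).Sublist X := by
  rw [← List.reverse_sublist] at h ⊢
  simp only [List.reverse_append, List.reverse_cons, List.reverse_nil, List.nil_append,
    List.singleton_append] at h ⊢
  exact sub_left h (by simpa using ha)

lemma sub_filter {t l : List ℕ} (P : ℕ → Bool) (h : t.Sublist l) (ht : ∀ x ∈ t, P x = true) :
    t.Sublist (l.filter P) := by
  have := h.filter P
  rwa [List.filter_eq_self.2 ht] at this

lemma glue_Av {A2 M C1 D : List ℕ} {b : ℕ} (hA1 : ∀ x ∈ A2, b < x) (hM : ∀ x ∈ M, x < b)
    (hD : ∀ x ∈ D, b < x) (hC : ∀ x ∈ C1, x < b) (hU : Av (M ++ b :: C1))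
    (hV : Av (A2 ++ b :: D)) : Av (A2 ++ ((M ++ [b]) ++ (D ++ C1))) := by
  intro p q r s h h1 h2 h3
  by_cases hs : s ≤ b
  · have := sub_filter (fun x => decide (x ≤ b)) h (by simp; omega)
    refine hU p q r s ?_ h1 h2 h3
    convert this using 1
    have e1 : A2.filter (fun x => decide (x ≤ b)) = [] := by
      simp [List.filter_eq_nil_iff]; exact hA1
    have e2 : D.filter (fun x => decide (x ≤ b)) = [] := by
      simp [List.filter_eq_nil_iff]; exact hD
    have e3 : M.filter (fun x => decide (x ≤ b)) = M := by
      simp [List.filter_eq_self]; intro x hx; exact (hM x hx).le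
    have e4 : C1.filter (fun x => decide (x ≤ b)) = C1 := by
      simp [List.filter_eq_self]; intro x hx; exact (hC x hx).le
    simp [e1, e2, e3, e4]
  by_cases hp : b ≤ p
  · have := sub_filter (fun x => decide (b ≤ x)) h (by simp; omega)
    refine hV p q r s ?_ h1 h2 h3
    convert this using 1
    have e1 : M.filter (fun x => decide (b ≤ x)) = [] := by
      simp [List.filter_eq_nil_iff]; exact hM
    have e2 : C1.filter (fun x => decide (b ≤ x)) = [] := by
      simp [List.filter_eq_nil_iff]; exact hC
    have e3 : A2.filter (fun x => decide (b ≤ x)) = A2 := by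
      simp [List.filter_eq_self]; intro x hx; exact (hA1 x hx).le
    have e4 : D.filter (fun x => decide (b ≤ x)) = D := by
      simp [List.filter_eq_self]; intro x hx; exact (hD x hx).le
    simp [e1, e2, e3, e4]
  have g1 := sub_left h (fun hh => by have := hA1 _ hh; omega)
  rw [← List.append_assoc] at g1
  have g2 : [p, q, r, s].Sublist ((M ++ [b]) ++ D) :=
    sub_right (t := [p, q, r]) g1 (fun hh => by have := hC _ hh; omega)
  have g3 := g2
  have hpM : p ∉ D := fun hh => by have := hD _ hh; omega
  have hsM : s ∉ M ++ [b] := fun hh => by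
    rcases List.mem_append.1 hh with hh | hh
    · have := hM _ hh; omega
    · simp at hh; omega
  by_cases hr : r ≤ b
  · -- r in M
    have hrD : r ∉ D := fun hh => by have := hD _ hh; omega
    have g4 : [p, q, r].Sublist ((M ++ [b]) ++ D) := by
      refine List.Sublist.trans ?_ g2
      simp
    have g5 : [p, q, r].Sublist (M ++ [b]) := sub_right (t := [p, q]) g4 hrD
    have hq : q ≤ b := by
      have : q ∈ M ++ [b] := g5.subset (by simp)
      rcases List.mem_append.1 this with hh | hh
      · exact (hM _ hh).le
      · simp at hh; omega
    have g6 : [p, q, r].Sublist M := sub_right (t := [p, q]) g5 (by simp; omega)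
    have hq' : q < b := hM _ (g6.subset (by simp))
    refine hU p q r b ?_ h1 h2 hq'
    exact List.Sublist.append (l₁ := [p, q, r]) (r₁ := [b]) g6 (by simp)
  · have hqM : q ∉ M ++ [b] := fun hh => by
      rcases List.mem_append.1 hh with hh | hh
      · have := hM _ hh; omega
      · simp at hh; omega
    have g4 : [q, r, s].Sublist ((M ++ [b]) ++ D) := by
      refine List.Sublist.trans ?_ g2
      simp
    have g5 := sub_left g4 hqM
    refine hV b q r s ?_ (by omega) h2 h3
    exact (g5.cons_cons b).trans (by simp)

lemma split_list {b : ℕ} {l : List ℕ} (hb : b ∉ l)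
    (h : ∀ x y, [x, y].Sublist l → x < b → b < y → False) :
    l = l.filter (fun x => decide (b < x)) ++ l.filter (fun x => decide (x < b)) := by
  induction l with
  | nil => simp
  | cons a l ih =>
    have ih' := ih (fun h' => hb (by simp [h'])) (fun x y hxy => h x y (hxy.cons a))
    have hab : a ≠ b := fun h' => hb (by simp [h'])
    by_cases hlt : b < a
    · have : ¬ a < b := by omega
      simp [hlt, this]
      exact ih'
    · have hab' : a < b := by omega
      have e1 : l.filter (fun x => decide (b < x)) = [] := by
        simp only [List.filter_eq_nil_iff, decide_eq_true_eq]
        intro y hy hby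
        exact h a y (by simpa using hy) hab' hby
      rw [e1] at ih'
      simp [hlt, hab', e1]
      simpa using ih'

def glue (b : ℕ) (t u : List ℕ × List ℕ × List ℕ) : List ℕ × List ℕ × List ℕ :=
  (u.1 ++ t.1, t.2.1 ++ [b], u.2.2 ++ t.2.2)

lemma QS_lt {lo hi k : ℕ} {t} (h : t ∈ QS lo hi k) : lo < hi := by
  obtain ⟨A, B, C⟩ := t
  obtain ⟨h1, h2, h3, h4⟩ := h
  have := (h2 lo).1 (by simp [Wd])
  rcases this.2.lt_or_eq with h | h
  · exact h
  · subst h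
    simp [Wd, List.nodup_append] at h1

lemma QS_ne {lo hi k : ℕ} {A B C} (h : (A, B, C) ∈ QS lo hi k) :
    (∀ x ∈ A, lo < x ∧ x < hi) ∧ (∀ x ∈ B, lo < x ∧ x < hi) ∧ (∀ x ∈ C, lo < x ∧ x < hi) := by
  obtain ⟨h1, h2, h3, h4⟩ := h
  simp only [Wd] at h1 h2
  have key : ∀ x, x ≠ lo → x ≠ hi → x ∈ A ++ lo :: (B ++ hi :: C) → lo < x ∧ x < hi := by
    intro x a b c
    have := (h2 x).1 c
    omega
  simp [List.nodup_append] at h1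
  refine ⟨fun x hx => key x ?_ ?_ (by simp [hx]), fun x hx => key x ?_ ?_ (by simp [hx]),
    fun x hx => key x ?_ ?_ (by simp [hx])⟩ <;> grind

lemma QS_one {lo hi : ℕ} {t} (h : t ∈ QS lo hi 1) : t.2.1 = [] := by
  have := h.2.2.2
  exact List.length_eq_zero_iff.1 (by omega)

lemma glue_mem_iff {lo b hi x : ℕ} {A1 B1 C1 A2 C2 : List ℕ} :
    x ∈ Wd lo hi (glue b (A1, B1, C1) (A2, [], C2)) ↔
        x ∈ A1 ++ lo :: (B1 ++ b :: C1) ∨ x ∈ A2 ++ b :: ([] ++ hi :: C2) := by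
  simp only [Wd, glue, List.mem_append, List.mem_cons, List.not_mem_nil, or_false, false_or]
  constructor
  · rintro ((h | h) | h | (h | h) | h | h | h) <;> simp [h]
  · rintro ((h | h | h | h | h) | (h | h | h | h)) <;> simp [h]

lemma glue_mem {lo b hi k : ℕ} {t u} (ht : t ∈ QS lo b k) (hu : u ∈ QS b hi 1) :
    glue b t u ∈ QS lo hi (k + 1) := by
  have hlo := QS_lt ht
  have hhi := QS_lt hu
  have hu1 := QS_one hu
  obtain ⟨A1, B1, C1⟩ := t
  obtain ⟨A2, B2, C2⟩ := u
  simp only at hu1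
  subst hu1
  have nt := QS_ne ht
  have nu := QS_ne hu
  obtain ⟨t1, t2, t3, t4⟩ := ht
  obtain ⟨u1, u2, u3, u4⟩ := hu
  simp only [Wd, glue] at *
  refine ⟨?_, ?_, ?_, ?_⟩
  · clear t2 t3 t4 u2 u3 u4
    obtain ⟨n1, n2, n3⟩ := nt
    obtain ⟨m1, -, m3⟩ := nu
    have dA : ∀ a ∈ A2, ∀ b ∈ A1, a ≠ b := fun a ha c hc => by
      have := m1 a ha; have := n1 c hc; omega
    have dC : ∀ a ∈ C2, ∀ b ∈ C1, a ≠ b := fun a ha c hc => by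
      have := m3 a ha; have := n3 c hc; omega
    simp only [Wd, glue, List.nodup_append, List.nodup_cons, List.mem_append, List.mem_cons,
      List.not_mem_nil, List.nil_append] at t1 u1 ⊢
    refine ⟨⟨u1.1, t1.1, dA⟩, ⟨?_, ⟨t1.2.1.2.1, ⟨by simp, List.nodup_nil⟩, ?_⟩, ⟨?_, u1.2.1.2.2,
      t1.2.1.2.2.1.2, dC⟩, ?_⟩, ?_⟩
    · rintro ((h | h | h) | h | h | h)
      · exact absurd (n2 _ h).1 (by omega)
      · omega
      · exact h
      · omega
      · exact absurd (m3 _ h).1 (by omega)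
      · exact absurd (n3 _ h).1 (by omega)
    · rintro x hx y (hy | hy)
      · have := n2 _ hx; omega
      · exact hy.elim
    · rintro (h | h)
      · exact absurd (m3 _ h).2 (by omega)
      · exact absurd (n3 _ h).2 (by omega)
    · rintro x (hx | hx | hx) y (hy | hy | hy)
      · have := n2 _ hx; omega
      · have := n2 _ hx; have := m3 _ hy; omega
      · exact t1.2.1.2.2.2 x hx y (Or.inr hy)
      · omega
      · have := m3 _ hy; omega
      · have := n3 _ hy; omega
      · exact hx.elim
      · exact hx.elim
      · exact hx.elim
    · rintro x (hx | hx) y (hy | (hy | hy | hy) | hy | hy | hy)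
      · have := m1 _ hx; omega
      · have := m1 _ hx; have := n2 _ hy; omega
      · have := m1 _ hx; omega
      · exact hy.elim
      · have := m1 _ hx; omega
      · exact u1.2.2 x hx y (Or.inr (Or.inr hy))
      · have := m1 _ hx; have := n3 _ hy; omega
      · have := n1 _ hx; omega
      · exact t1.2.2 x hx y (Or.inr (Or.inl hy))
      · have := n1 _ hx; omega
      · exact hy.elim
      · have := n1 _ hx; omega
      · have := n1 _ hx; have := m3 _ hy; omega
      · exact t1.2.2 x hx y (Or.inr (Or.inr (Or.inr hy)))
  · intro x
    have e1 := t2 x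
    have e2 := u2 x
    have : x ∈ Wd lo hi (glue b (A1, B1, C1) (A2, [], C2)) ↔
        x ∈ A1 ++ lo :: (B1 ++ b :: C1) ∨ x ∈ A2 ++ b :: ([] ++ hi :: C2) := by
      exact glue_mem_iff
    simp only [glue] at this
    rw [this, e1, e2]
    omega
  · have := @glue_Av A2 (A1 ++ lo :: B1) C1 (hi :: C2) b (fun x hx => (nu.1 x hx).1)
      (by simp; grind) (by simp; grind) (by grind) (by simpa using t3) (by simpa using u3)
    simpa [Wd, glue] using this
  · simp; simpa using t4

lemma glue_inj {lo b b' hi k : ℕ} {t u t' u'} (ht : t ∈ QS lo b k) (hu : u ∈ QS b hi 1)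
    (ht' : t' ∈ QS lo b' k) (hu' : u' ∈ QS b' hi 1) (h : glue b t u = glue b' t' u') :
    b = b' ∧ t = t' ∧ u = u' := by
  have hu1 := QS_one hu
  have hu1' := QS_one hu'
  obtain ⟨A1, B1, C1⟩ := t
  obtain ⟨A2, B2, C2⟩ := u
  obtain ⟨A1', B1', C1'⟩ := t'
  obtain ⟨A2', B2', C2'⟩ := u'
  simp only at hu1 hu1'
  subst hu1 hu1'
  simp only [glue, Prod.mk.injEq] at h
  obtain ⟨h1, h2, h3⟩ := h
  have hb : b = b' := by simpa using (List.append_inj' h2 rfl).2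
  have hB := (List.append_inj' h2 rfl).1
  subst hb hB
  have nt := QS_ne ht
  have nu := QS_ne hu
  have nt' := QS_ne ht'
  have nu' := QS_ne hu'
  have key : ∀ X Y X' Y' : List ℕ, (∀ x ∈ X, b < x) → (∀ x ∈ Y, x < b) → (∀ x ∈ X', b < x) →
      (∀ x ∈ Y', x < b) → X ++ Y = X' ++ Y' → X = X' ∧ Y = Y' := by
    intro X Y X' Y' a1 a2 a3 a4 e
    have f1 : ∀ X Y : List ℕ, (∀ x ∈ X, b < x) → (∀ x ∈ Y, x < b) →
        (X ++ Y).filter (fun x => decide (b < x)) = X := by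
      intro X Y a1 a2
      rw [List.filter_append, List.filter_eq_self.2 (by simpa using a1),
        List.filter_eq_nil_iff.2 (by intro x hx; have := a2 x hx; simp; omega)]
      simp
    have hX : X = X' := by rw [← f1 X Y a1 a2, e, f1 X' Y' a3 a4]
    subst hX
    exact ⟨rfl, List.append_cancel_left e⟩
  have := key A2 A1 A2' A1' (by grind) (by grind) (by grind) (by grind) h1
  have := key C2 C1 C2' C1' (by grind) (by grind) (by grind) (by grind) h3
  simp [*]

lemma glue_surj {lo hi k : ℕ} (hk : 1 ≤ k) {t} (ht : t ∈ QS lo hi (k + 1)) :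
    ∃ b u v, u ∈ QS lo b k ∧ v ∈ QS b hi 1 ∧ glue b u v = t := by
  obtain ⟨A, B, C⟩ := t
  have hlt := QS_lt ht
  have nt := QS_ne ht
  obtain ⟨h1, h2, h3, h4⟩ := ht
  have hB : B ≠ [] := by rintro rfl; simp at h4; omega
  obtain ⟨B, b, rfl⟩ : ∃ B' b, B = B' ++ [b] := ⟨_, _, (List.dropLast_append_getLast hB).symm⟩
  have hb := nt.2.1 b (by simp)
  simp only [Wd] at h1 h2 h3 h4
  have hBb : ∀ x ∈ B, x < b := by
    intro x hx
    by_contra hcon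
    have hne : x ≠ b := by
      rintro rfl
      simp [List.nodup_append] at h1; grind
    refine h3 lo x b hi ?_ hb.1 (by omega) (nt.2.1 x (by simp [hx])).2
    refine List.Sublist.trans ?_ (List.sublist_append_right _ _)
    refine List.Sublist.cons_cons lo ?_
    have : [x, b].Sublist (B ++ [b]) :=
      List.Sublist.append (l₁ := [x]) (r₁ := [b]) (by simpa using hx) (by simp)
    exact List.Sublist.append this (r₁ := [hi]) (by simp)
  have hA : A = A.filter (fun x => decide (b < x)) ++ A.filter (fun x => decide (x < b)) := by
    apply split_list
    · intro hh; simp [List.nodup_append] at h1; grind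
    · intro x y hs hx hy
      refine h3 x y b hi (List.Sublist.append (l₁ := [x, y]) (r₁ := [b, hi]) hs ?_) hx hy
        (nt.1 y (hs.subset (by simp))).2
      refine List.Sublist.cons _ ?_
      exact List.Sublist.append (l₁ := [b]) (r₁ := [hi]) (by simp) (by simp)
  have hC : C = C.filter (fun x => decide (b < x)) ++ C.filter (fun x => decide (x < b)) := by
    apply split_list
    · intro hh; simp [List.nodup_append] at h1; grind
    · intro x y hs hx hy
      refine h3 lo b x y ?_ (nt.2.2 x (hs.subset (by simp))).1 hx hy
      refine List.Sublist.trans ?_ (List.sublist_append_right _ _)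
      refine List.Sublist.cons_cons lo ?_
      exact List.Sublist.append (l₁ := [b]) (r₁ := [x, y]) (by simp) (hs.cons _)
  generalize hA2 : A.filter (fun x => decide (b < x)) = A2 at hA
  generalize hA1 : A.filter (fun x => decide (x < b)) = A1 at hA
  generalize hC2 : C.filter (fun x => decide (b < x)) = C2 at hC
  generalize hC1 : C.filter (fun x => decide (x < b)) = C1 at hC
  have a2 : ∀ x ∈ A2, b < x := by subst hA2; simp
  have a1 : ∀ x ∈ A1, x < b := by subst hA1; simp
  have c2 : ∀ x ∈ C2, b < x := by subst hC2; simp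
  have c1 : ∀ x ∈ C1, x < b := by subst hC1; simp
  clear hA1 hA2 hC1 hC2
  subst hA hC
  have sU : (A1 ++ lo :: (B ++ b :: C1)).Sublist
      (A2 ++ A1 ++ lo :: (B ++ [b] ++ hi :: (C2 ++ C1))) := by
    refine List.Sublist.append (by simp) (List.Sublist.cons_cons _ ?_)
    have : (B ++ b :: C1) = (B ++ [b]) ++ C1 := by simp
    rw [this]
    refine List.Sublist.append (by simp) (List.Sublist.cons _ (by simp))
  have sV : (A2 ++ b :: hi :: C2).Sublist
      (A2 ++ A1 ++ lo :: (B ++ [b] ++ hi :: (C2 ++ C1))) := by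
    refine List.Sublist.append (by simp) (List.Sublist.cons _ ?_)
    refine List.Sublist.append (l₁ := [b]) (by simp) (List.Sublist.cons_cons _ (by simp))
  refine ⟨b, (A1, B, C1), (A2, [], C2), ⟨h1.sublist sU, ?_, h3.mono sU, ?_⟩,
    ⟨h1.sublist sV, ?_, h3.mono sV, ?_⟩, ?_⟩
  · intro x
    constructor
    · intro hx
      refine ⟨((h2 x).1 (sU.subset hx)).1, ?_⟩
      simp only [Wd, List.mem_append, List.mem_cons] at hx
      rcases hx with hx | hx | hx | hx | hx
      · exact (a1 _ hx).le
      · omega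
      · exact (hBb _ hx).le
      · omega
      · exact (c1 _ hx).le
    · rintro ⟨hx1, hx2⟩
      have := (h2 x).2 ⟨hx1, by omega⟩
      simp only [Wd, List.mem_append, List.mem_cons, List.not_mem_nil] at this ⊢
      rcases this with (h | h) | h | (h | h | h) | h | h | h
      · have := a2 _ h; omega
      · tauto
      · tauto
      · tauto
      · tauto
      · tauto
      · omega
      · have := c2 _ h; omega
      · tauto
  · simpa using h4
  · intro x
    constructor
    · intro hx
      refine ⟨?_, ((h2 x).1 (sV.subset hx)).2⟩
      simp only [Wd, List.mem_append, List.mem_cons, List.not_mem_nil] at hx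
      rcases hx with hx | hx | hx | hx | hx
      · exact (a2 _ hx).le
      · omega
      · exact hx.elim
      · omega
      · exact (c2 _ hx).le
    · rintro ⟨hx1, hx2⟩
      have := (h2 x).2 ⟨by omega, hx2⟩
      simp only [Wd, List.mem_append, List.mem_cons, List.not_mem_nil] at this ⊢
      rcases this with (h | h) | h | (h | h | h) | h | h | h
      · tauto
      · have := a1 _ h; omega
      · omega
      · have := hBb _ h; omega
      · tauto
      · tauto
      · tauto
      · tauto
      · have := c1 _ h; omega
  · simp
  · simp [glue]

lemma Av_map (c : ℕ) (l : List ℕ) : Av (l.map (· + c)) ↔ Av l := by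
  constructor
  · intro h p q r s hs h1 h2 h3
    exact h (p + c) (q + c) (r + c) (s + c) (hs.map (· + c)) (by omega) (by omega) (by omega)
  · intro h p q r s hs h1 h2 h3
    obtain ⟨m, hm, e⟩ := List.sublist_map_iff.1 hs
    match m, e with
    | [p', q', r', s'], e =>
      simp at e
      exact h p' q' r' s' hm (by omega) (by omega) (by omega)

def shift (c : ℕ) (t : List ℕ × List ℕ × List ℕ) : List ℕ × List ℕ × List ℕ :=
  (t.1.map (· + c), t.2.1.map (· + c), t.2.2.map (· + c))

lemma Wd_shift (c d : ℕ) (t) : Wd c (c + d) (shift c t) = (Wd 0 d t).map (· + c) := by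
  simp [Wd, shift, add_comm]

lemma shift_mem (c d k : ℕ) (t) : shift c t ∈ QS c (c + d) k ↔ t ∈ QS 0 d k := by
  have hinj : Function.Injective (fun x : ℕ => x + c) := fun x y h => by simpa using h
  simp only [QS, Set.mem_setOf_eq, Wd_shift, Av_map, List.nodup_map_iff hinj]
  refine and_congr_right fun _ => and_congr ?_ (and_congr_right fun _ => by simp [shift])
  constructor
  · intro h x
    have := h (x + c)
    rw [List.mem_map_of_injective hinj] at this
    rw [this]; omega
  · intro h x
    simp only [List.mem_map, h]
    constructor
    · rintro ⟨y, hy, rfl⟩; omega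
    · intro hx; exact ⟨x - c, by omega, by omega⟩

lemma shift_inj (c : ℕ) : Function.Injective (shift c) := by
  have hinj : Function.Injective (fun x : ℕ => x + c) := fun x y h => by simpa using h
  have := List.map_injective_iff.2 hinj
  rintro ⟨a, b, d⟩ ⟨a', b', d'⟩ h
  simp only [shift, Prod.mk.injEq] at h
  rw [this h.1, this h.2.1, this h.2.2]

lemma QS_shift (c d k : ℕ) : QS c (c + d) k = shift c '' QS 0 d k := by
  ext t
  constructor
  · intro ht
    have hne := QS_ne (A := t.1) (B := t.2.1) (C := t.2.2) ht
    have key : ∀ l : List ℕ, (∀ x ∈ l, c < x ∧ x < c + d) →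
        (l.map (· - c)).map (· + c) = l := by
      intro l hl
      rw [List.map_map]
      conv_rhs => rw [← List.map_id l]
      apply List.map_congr_left
      intro x hx
      have := hl x hx
      simp; omega
    have e : shift c (t.1.map (· - c), t.2.1.map (· - c), t.2.2.map (· - c)) = t := by
      simp only [shift, key _ hne.1, key _ hne.2.1, key _ hne.2.2]
    refine ⟨_, ?_, e⟩
    rw [← shift_mem c, e]
    exact ht
  · rintro ⟨u, hu, rfl⟩
    exact (shift_mem c d k u).2 hu

def toL {n : ℕ} (σ : Equiv.Perm (Fin n)) : List ℕ := List.ofFn (fun i => (σ i : ℕ))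

lemma toL_inj {n : ℕ} : Function.Injective (toL (n := n)) := by
  intro σ τ h
  have := List.ofFn_injective h
  ext i
  exact congrFun this i

lemma Av_toL {n : ℕ} (σ : Equiv.Perm (Fin n)) : Av (toL σ) ↔ Avoids1324 σ := by
  constructor
  · rintro h ⟨i, j, k, l, hij, hjk, hkl, h1, h2, h3⟩
    refine h (σ i) (σ j) (σ k) (σ l) ?_ h1 h2 h3
    have : [i, j, k, l].Sublist (List.finRange n) := by
      apply List.sublist_of_subperm_of_pairwise (r := (· < ·))
      · apply List.Nodup.subperm
        · simp; omega
        · intro x _; simp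
      · simp; omega
      · exact List.pairwise_lt_finRange n
    have := this.map (fun i => (σ i : ℕ))
    simpa [toL, List.ofFn_eq_map] using this
  · rintro h p q r s hs h1 h2 h3
    rw [toL, List.ofFn_eq_map] at hs
    obtain ⟨m, hm, e⟩ := List.sublist_map_iff.1 hs
    match m, e with
    | [i, j, k, l], e =>
      have hp := (List.pairwise_lt_finRange n).sublist hm
      simp at e hp
      obtain ⟨rfl, rfl, rfl, rfl⟩ := e
      exact h ⟨i, j, k, l, hp.1.1, hp.2.1.1, hp.2.2, h1, h2, h3⟩

lemma image_eq (n k : ℕ) (hk : 1 ≤ k) : toL '' SPerm (n + 1) 1 k = Wd 0 n '' QS 0 n k := by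
  ext l
  constructor
  · rintro ⟨σ, ⟨hav, hn, ha, hpos, -⟩, rfl⟩
    set p := σ.symm ⟨1 - 1, ha⟩ with hp
    set q := σ.symm ⟨n + 1 - 1, hn⟩ with hq
    have hσp : (σ p : ℕ) = 0 := by simp [hp]
    have hσq : (σ q : ℕ) = n := by simp [hq]
    have hlen : (toL σ).length = n + 1 := by simp [toL]
    have hgp : (toL σ)[(p : ℕ)]'(by omega) = 0 := by simp only [toL, List.getElem_ofFn, Fin.eta, hσp]
    have hgq : (toL σ)[(q : ℕ)]'(by omega) = n := by simp only [toL, List.getElem_ofFn, Fin.eta, hσq]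
    have e : Wd 0 n ((toL σ).take p, ((toL σ).drop (p + 1)).take (k - 1), (toL σ).drop (q + 1))
        = toL σ := by
      simp only [Wd]
      conv_rhs => rw [← List.take_append_drop p (toL σ)]
      congr 1
      rw [List.drop_eq_getElem_cons (i := (p : ℕ)) (by omega), hgp]
      congr 1
      conv_rhs => rw [← List.take_append_drop (k - 1) ((toL σ).drop (p + 1))]
      congr 1
      rw [List.drop_drop, show (p : ℕ) + 1 + (k - 1) = q by omega,
        List.drop_eq_getElem_cons (i := (q : ℕ)) (by omega), hgq]
    refine ⟨_, ⟨?_, ?_, ?_, ?_⟩, e⟩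
    · rw [e, toL, List.nodup_ofFn]
      exact fun i j h => σ.injective (Fin.ext h)
    · intro x
      rw [e, toL, List.mem_ofFn]
      constructor
      · rintro ⟨i, rfl⟩; have := (σ i).2; omega
      · intro hx; exact ⟨σ.symm ⟨x, by omega⟩, by simp⟩
    · rw [e, Av_toL]; exact hav
    · simp [hlen]; have := q.2; omega
  · rintro ⟨t, ht, rfl⟩
    obtain ⟨h1, h2, h3, h4⟩ := ht
    have hlen : (Wd 0 n t).length = n + 1 := by
      have : (Wd 0 n t).Perm (List.range (n + 1)) := by
        rw [List.perm_ext_iff_of_nodup h1 List.nodup_range]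
        intro x; rw [h2, List.mem_range]; omega
      simpa using this.length_eq
    have hinj : Function.Injective (fun i : Fin (n + 1) =>
        (⟨(Wd 0 n t)[(i : ℕ)]'(by omega), by
          have := (h2 _).1 (List.getElem_mem (l := Wd 0 n t) (n := i) (by omega)); omega⟩ :
          Fin (n + 1))) := by
      intro i j hij
      simp only [Fin.mk.injEq] at hij
      exact Fin.ext ((h1.getElem_inj_iff).1 hij)
    let σ : Equiv.Perm (Fin (n + 1)) := Equiv.ofBijective _ (Finite.injective_iff_bijective.1 hinj)
    have hσ : ∀ i : Fin (n + 1), (σ i : ℕ) = (Wd 0 n t)[(i : ℕ)]'(by omega) := fun i => rfl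
    have e : toL σ = Wd 0 n t := by
      apply List.ext_getElem
      · simp [toL, hlen]
      · intro i hi hi'
        simp only [toL, List.getElem_ofFn, hσ]
    have hl2 : t.1.length + 1 + t.2.1.length + 1 + t.2.2.length = n + 1 := by
      rw [← hlen]; simp [Wd]; omega
    have e0 : σ.symm ⟨1 - 1, by omega⟩ = ⟨t.1.length, by omega⟩ := by
      rw [Equiv.symm_apply_eq]
      apply Fin.ext
      rw [hσ]
      simp [Wd]
    have en : σ.symm ⟨n + 1 - 1, by omega⟩ = ⟨t.1.length + k, by omega⟩ := by
      rw [Equiv.symm_apply_eq]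
      apply Fin.ext
      rw [hσ]
      subst h4
      simp [Wd, List.getElem_append]
    refine ⟨σ, ⟨?_, by omega, by omega, ?_, fun b hb => by omega⟩, e⟩
    · rw [← Av_toL, e]; exact h3
    · rw [e0, en]

lemma Wd_injOn (n k : ℕ) : Set.InjOn (Wd 0 n) (QS 0 n k) := by
  rintro ⟨A, B, C⟩ h ⟨A', B', C'⟩ h' e
  have g := QS_ne h
  have g' := QS_ne h'
  have hl := h.2.2.2
  have hl' := h'.2.2.2
  simp only [Wd] at e hl hl'
  have key : ∀ A A' X X' : List ℕ, (∀ x ∈ A, 0 < x) → (∀ x ∈ A', 0 < x) →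
      A ++ 0 :: X = A' ++ 0 :: X' → A = A' ∧ X = X' := by
    intro A
    induction A with
    | nil =>
      intro A' X X' _ hA' e
      cases A' with
      | nil => simpa using e
      | cons a A' => simp at e hA'; omega
    | cons a A ih =>
      intro A' X X' hA hA' e
      cases A' with
      | nil => simp at e hA; omega
      | cons a' A' =>
        simp at e hA hA'
        have := ih A' X X' hA.2 hA'.2 e.2
        simp [e.1, this.1, this.2]
  obtain ⟨r1, r2⟩ := key _ _ _ _ (fun x hx => (g.1 x hx).1) (fun x hx => (g'.1 x hx).1) e
  obtain ⟨r3, r4⟩ := List.append_inj r2 (by omega)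
  simp at r4
  simp [r1, r3, r4]

lemma card_SPerm (n k : ℕ) (hk : 1 ≤ k) : (SPerm (n + 1) 1 k).ncard = (QS 0 n k).ncard := by
  rw [← Set.ncard_image_of_injective _ toL_inj, image_eq n k hk,
    Set.ncard_image_of_injOn (Wd_injOn n k)]

lemma QS_fin0 (n k : ℕ) (hk : 1 ≤ k) : (QS 0 n k).Finite := by
  apply Set.Finite.of_finite_image _ (Wd_injOn n k)
  rw [← image_eq n k hk]
  exact (Set.toFinite _).image _

lemma QS_fin (lo d k : ℕ) (hk : 1 ≤ k) : (QS lo (lo + d) k).Finite := by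
  rw [QS_shift]; exact (QS_fin0 d k hk).image _

lemma QS_card (lo d k : ℕ) : (QS lo (lo + d) k).ncard = (QS 0 d k).ncard := by
  rw [QS_shift, Set.ncard_image_of_injective _ (shift_inj lo)]

lemma recur (n k : ℕ) (hk : 1 ≤ k) : (QS 0 n (k + 1)).ncard =
    ∑ b ∈ Finset.range (n + 1), (QS 0 b k).ncard * (QS 0 (n - b) 1).ncard := by
  let F : (Σ b : Fin (n + 1), (QS 0 b k) × (QS b n 1)) → QS 0 n (k + 1) :=
    fun x => ⟨glue x.1 x.2.1 x.2.2, glue_mem x.2.1.2 x.2.2.2⟩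
  have hF : Function.Bijective F := by
    constructor
    · rintro ⟨b, ⟨t, ht⟩, ⟨u, hu⟩⟩ ⟨b', ⟨t', ht'⟩, ⟨u', hu'⟩⟩ h
      have h' : glue b t u = glue b' t' u' := congrArg Subtype.val h
      obtain ⟨e1, e2, e3⟩ := glue_inj ht hu ht' hu' h'
      have e1 := Fin.ext e1
      subst e1 e2 e3
      rfl
    · rintro ⟨t, ht⟩
      obtain ⟨b, u, v, hu, hv, e⟩ := glue_surj hk ht
      have := QS_lt hv
      exact ⟨⟨⟨b, by omega⟩, ⟨u, hu⟩, ⟨v, hv⟩⟩, Subtype.ext e⟩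
  have f1 : ∀ b : Fin (n + 1), Finite (QS 0 b k) := fun b => (QS_fin0 b k hk).to_subtype
  have f2 : ∀ b : Fin (n + 1), Finite (QS b n 1) := fun b => by
    have := QS_fin b (n - b) 1 le_rfl
    rw [show (b : ℕ) + (n - b) = n by omega] at this
    exact this.to_subtype
  have := Nat.card_congr (Equiv.ofBijective F hF)
  rw [Nat.card_sigma] at this
  rw [← Nat.card_coe_set_eq, ← this, Finset.sum_range]
  refine Finset.sum_congr rfl fun b _ => ?_
  rw [Nat.card_prod, Nat.card_coe_set_eq, Nat.card_coe_set_eq]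
  congr 1
  rw [← QS_card b (n - b) 1, show (b : ℕ) + (n - b) = n by omega]

lemma QS_zero (k : ℕ) : (QS 0 0 k).ncard = 0 := by
  have : QS 0 0 k = ∅ := Set.eq_empty_of_forall_notMem fun t ht => lt_irrefl _ (QS_lt ht)
  simp [this]

lemma series_eq (k : ℕ) (hk : 1 ≤ k) :
    (PowerSeries.mk fun n => if n = 0 then 0 else ((SPerm n 1 k).ncard : ℤ)) =
      PowerSeries.X * (PowerSeries.mk fun n => ((QS 0 n k).ncard : ℤ)) := by
  ext n
  cases n with
  | zero => simp
  | succ n => simp [PowerSeries.coeff_succ_X_mul, card_SPerm n k hk]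

lemma f_eq :
    (PowerSeries.mk fun n => if n = 0 then 0 else ((SPerm (n + 1) 1 1).ncard : ℤ)) =
      (PowerSeries.mk fun n => ((QS 0 n 1).ncard : ℤ)) := by
  ext n
  cases n with
  | zero => simp [QS_zero]
  | succ n => simp [card_SPerm (n + 1) 1 le_rfl]

lemma pow_eq (k : ℕ) (hk : 1 ≤ k) :
    (PowerSeries.mk fun n => ((QS 0 n k).ncard : ℤ)) =
      (PowerSeries.mk fun n => ((QS 0 n 1).ncard : ℤ)) ^ k := by
  induction k, hk using Nat.le_induction with
  | base => simp
  | succ k hk ih =>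
    rw [pow_succ, ← ih]
    ext n
    rw [PowerSeries.coeff_mul, Finset.Nat.sum_antidiagonal_eq_sum_range_succ_mk]
    simp only [PowerSeries.coeff_mk, recur n k hk]
    push_cast
    rfl

/-- in `ℤ⟦x⟧`, with `f = Σ_{n≥1} a_{n+1,1} xⁿ` and
`T_{1,k} = Σ_{n≥1} a_{n,k} xⁿ`, we have `T_{1,k} = x ⬝ f^k` for every `k ≥ 1`. -/
theorem stmt_6 (k : ℕ) (hk : 1 ≤ k) :
    (PowerSeries.mk fun n => if n = 0 then 0 else ((SPerm n 1 k).ncard : ℤ)) =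
      PowerSeries.X *
        (PowerSeries.mk fun n => if n = 0 then 0 else ((SPerm (n + 1) 1 1).ncard : ℤ)) ^ k := by
  rw [series_eq k hk, f_eq, pow_eq k hk]
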